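/- Boettcher coordinate on a superattracting immediate basin: let p be a polynomial over ℂ of degree d ≥ 2, f(z) = p.eval (conj z), and let z₀ be a superattracting fixed point: f(z₀) = z₀ and p.derivative.eval (conj z₀) = 0. Let m ≥ 2 be the local degree of f at z₀, i.e., the multiplicity of conj z₀ as a root of the polynomial p − C z₀. Let A be the immediate basin of z₀, the connected component containing z₀ of {z : ℂ | f^[n](z) → z₀}. If A contains no critical point of f other than z₀, then A is simply connected and there is a conformal map of the open unit disk onto A conjugating w ↦ (conj w)^m to f: there exists φ : ℂ → ℂ, complex analytic and injective on the open unit disk 𝔻, with φ(0) = z₀, φ(𝔻) = A, and f(φ(w)) = φ((conj w)^m) for all w ∈ 𝔻. -/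

import Mathlib

open Filter Topology
open scoped ComplexConjugate

lemma bott_exp_lip {M : ℝ} {a b : ℂ} (ha : ‖a‖ ≤ M) (hb : ‖b‖ ≤ M) :
    ‖Complex.exp a - Complex.exp b‖ ≤ Real.exp M * ‖a - b‖ := by
  have h := (convex_closedBall (0:ℂ) M).norm_image_sub_le_of_norm_deriv_le
    (f := Complex.exp) (C := Real.exp M) (fun x _ => Complex.differentiable_exp x)
    (fun x hx => by
      rw [Complex.deriv_exp, Complex.norm_exp]
      apply Real.exp_le_exp.2
      exact (Complex.re_le_norm x).trans (by simpa using hx))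
    (x := b) (y := a) (by simpa using hb) (by simpa using ha)
  exact h

lemma bott_log (Q : ℂ → ℂ) (hQ : AnalyticAt ℂ Q 0) (hQ0 : Q 0 ≠ 0) :
    ∃ L : ℂ → ℂ, ∃ ρ > 0, ∃ K : ℝ, 0 ≤ K ∧ ∃ M : ℝ, 0 ≤ M ∧
      DifferentiableOn ℂ L (Metric.ball 0 ρ) ∧
      (∀ u ∈ Metric.ball (0:ℂ) ρ, Complex.exp (L u) = Q u) ∧
      (∀ u ∈ Metric.ball (0:ℂ) ρ, ‖L u‖ ≤ M) ∧
      (∀ u ∈ Metric.ball (0:ℂ) ρ, ∀ v ∈ Metric.ball (0:ℂ) ρ, ‖L u - L v‖ ≤ K * ‖u - v‖) := by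
  set L : ℂ → ℂ := fun u => Complex.log (Q u / Q 0) + Complex.log (Q 0) with hL
  have hLa : AnalyticAt ℂ L 0 := by
    refine AnalyticAt.add (AnalyticAt.clog (hQ.div analyticAt_const hQ0) ?_) analyticAt_const
    rw [div_self hQ0]; exact Complex.one_mem_slitPlane
  obtain ⟨K, s, hs, hK⟩ := ContDiffAt.exists_lipschitzOnWith (𝕂 := ℂ) (f := L) (x := 0) hLa.contDiffAt
  have h1 : ∀ᶠ u in 𝓝 (0:ℂ), DifferentiableAt ℂ L u :=
    hLa.eventually_analyticAt.mono fun u hu => hu.differentiableAt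
  have h2 : ∀ᶠ u in 𝓝 (0:ℂ), Q u ≠ 0 := hQ.continuousAt.eventually_ne hQ0
  obtain ⟨ρ, hρ, H⟩ := Metric.eventually_nhds_iff_ball.1 (h1.and (h2.and hs))
  have hlip : ∀ u ∈ Metric.ball (0:ℂ) ρ, ∀ v ∈ Metric.ball (0:ℂ) ρ, ‖L u - L v‖ ≤ K * ‖u - v‖ := by
    intro u hu v hv
    have := hK.dist_le_mul u (H u hu).2.2 v (H v hv).2.2
    simpa [dist_eq_norm] using this
  refine ⟨L, ρ, hρ, K, K.2, ‖L 0‖ + K * ρ, by positivity, fun u hu => (H u hu).1.differentiableWithinAt, ?_, ?_, hlip⟩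
  · intro u hu
    have := (H u hu).2.1
    simp only [hL]
    rw [Complex.exp_add, Complex.exp_log (div_ne_zero this hQ0), Complex.exp_log hQ0]
    field_simp
  · intro u hu
    have h := hlip u hu 0 (Metric.mem_ball_self hρ)
    have h3 : ‖u‖ < ρ := by simpa using hu
    have h4 : (K:ℝ) * ‖u - 0‖ ≤ K * ρ := by
      rw [sub_zero]; exact mul_le_mul_of_nonneg_left h3.le K.2
    have h5 : ‖L u‖ ≤ ‖L u - L 0‖ + ‖L 0‖ := by simpa using norm_add_le (L u - L 0) (L 0)
    linarith

lemma bott_local (Q : ℂ → ℂ) (hQ : AnalyticAt ℂ Q 0) (hQ0 : Q 0 ≠ 0) (m : ℕ) (hm : 2 ≤ m) :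
    ∃ r : ℝ, 0 < r ∧ r < 1 ∧ ∃ η : ℂ → ℂ, DifferentiableOn ℂ η (Metric.ball 0 r) ∧
      ∀ w ∈ Metric.ball (0:ℂ) r,
        ((conj w)^m) * Complex.exp (η ((conj w)^m)) =
          (conj (w * Complex.exp (η w)))^m * Q (conj (w * Complex.exp (η w))) := by
  obtain ⟨L, ρ, hρ, K, hK, M, hM, hLd, hLe, hLb, hLl⟩ := bott_log Q hQ hQ0
  obtain ⟨r, hr, hr1, hr2, hr3⟩ : ∃ r : ℝ, 0 < r ∧ r ≤ 1/2 ∧ r * Real.exp M ≤ ρ ∧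
      K * (r * Real.exp M) ≤ 1/2 := by
    have hE := Real.exp_pos M
    refine ⟨min (1/2) (min (ρ / Real.exp M) (1 / (2 * (K+1) * Real.exp M))), by positivity, min_le_left _ _, ?_, ?_⟩
    · rw [← le_div_iff₀ hE]; exact (min_le_right _ _).trans (min_le_left _ _)
    · set x := min (1/2) (min (ρ / Real.exp M) (1 / (2 * (K+1) * Real.exp M)))
      have : x ≤ 1 / (2 * (K+1) * Real.exp M) := (min_le_right _ _).trans (min_le_right _ _)
      rw [le_div_iff₀ (by positivity)] at this
      have hx : 0 < x := by positivity
      nlinarith [mul_pos hx hE]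
  have hmR : (2:ℝ) ≤ m := by exact_mod_cast hm
  have hm0 : (m:ℂ) ≠ 0 := by norm_cast; omega
  set B := Metric.ball (0:ℂ) r with hB
  have hσ : ∀ w ∈ B, (conj w)^m ∈ B := by
    intro w hw
    simp only [hB, mem_ball_zero_iff, norm_pow, RCLike.norm_conj] at hw ⊢
    refine lt_of_le_of_lt ?_ hw
    exact pow_le_of_le_one (norm_nonneg _) (by linarith) (by omega)
  have hwe : ∀ w ∈ B, ∀ x : ℂ, ‖x‖ ≤ M → conj (w * Complex.exp x) ∈ Metric.ball (0:ℂ) ρ := by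
    intro w hw x hx
    simp only [hB, mem_ball_zero_iff, RCLike.norm_conj, norm_mul] at hw ⊢
    have : ‖Complex.exp x‖ ≤ Real.exp M := by
      rw [Complex.norm_exp]; exact Real.exp_le_exp.2 ((Complex.re_le_norm x).trans hx)
    calc ‖w‖ * ‖Complex.exp x‖ ≤ ‖w‖ * Real.exp M := by gcongr
      _ < r * Real.exp M := by gcongr
      _ ≤ ρ := hr2
  set T : (ℂ → ℂ) → ℂ → ℂ := fun η w =>
    conj (η ((conj w)^m) - L (conj (w * Complex.exp (η w)))) / m with hT
  have hTd : ∀ η, DifferentiableOn ℂ η B → (∀ w ∈ B, ‖η w‖ ≤ M) →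
      DifferentiableOn ℂ (T η) B ∧ (∀ w ∈ B, ‖T η w‖ ≤ M) := by
    intro η hη hb
    constructor
    · intro w hw
      have hBo : IsOpen B := Metric.isOpen_ball
      have hd : ∀ w ∈ B, DifferentiableAt ℂ η w := fun w hw => hη.differentiableAt (hBo.mem_nhds hw)
      have hcw : conj w ∈ B := by simpa [hB] using hw
      have e1 : DifferentiableAt ℂ (fun x => conj (η ((conj x)^m))) w := by
        have : DifferentiableAt ℂ (fun x => η (x^m)) (conj w) :=
          DifferentiableAt.comp (conj w) (hd _ (hσ w hw)) (by fun_prop)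
        simpa [Function.comp_def] using this.conj_conj
      have e2 : DifferentiableAt ℂ (fun x => conj (L (conj (x * Complex.exp (η x))))) w := by
        have h1 : DifferentiableAt ℂ L (conj (w * Complex.exp (η w))) :=
          hLd.differentiableAt (Metric.isOpen_ball.mem_nhds (hwe w hw _ (hb w hw)))
        have h2 : DifferentiableAt ℂ (conj ∘ L ∘ conj) (w * Complex.exp (η w)) := by
          simpa using h1.conj_conj
        have h3 : DifferentiableAt ℂ (fun x => x * Complex.exp (η x)) w :=
          differentiableAt_id.mul (hd w hw).cexp
        exact DifferentiableAt.comp (g := conj ∘ L ∘ conj) w h2 h3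
      refine DifferentiableAt.differentiableWithinAt ?_
      have := (e1.sub e2).div_const (m:ℂ)
      refine this.congr_of_eventuallyEq (Eventually.of_forall fun x => ?_)
      simp [hT]
    · intro w hw
      simp only [hT, norm_div, RCLike.norm_conj, Complex.norm_natCast]
      rw [div_le_iff₀ (by linarith)]
      have := norm_sub_le (η ((conj w)^m)) (L (conj (w * Complex.exp (η w))))
      have h1 := hb _ (hσ w hw)
      have h2 := hLb _ (hwe w hw _ (hb w hw))
      nlinarith
  have hTc : ∀ η ξ : ℂ → ℂ, (∀ w ∈ B, ‖η w‖ ≤ M) → (∀ w ∈ B, ‖ξ w‖ ≤ M) → ∀ C : ℝ,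
      (∀ w ∈ B, ‖η w - ξ w‖ ≤ C) → ∀ w ∈ B, ‖T η w - T ξ w‖ ≤ 3/4 * C := by
    intro η ξ hη hξ C hC w hw
    have e : T η w - T ξ w = conj ((η ((conj w)^m) - ξ ((conj w)^m)) -
      (L (conj (w * Complex.exp (η w))) - L (conj (w * Complex.exp (ξ w))))) / m := by
      simp only [hT, map_sub]; ring
    rw [e, norm_div, RCLike.norm_conj, Complex.norm_natCast, div_le_iff₀ (by linarith)]
    have h0 := norm_sub_le (η ((conj w)^m) - ξ ((conj w)^m))
      (L (conj (w * Complex.exp (η w))) - L (conj (w * Complex.exp (ξ w))))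
    have h1 := hC _ (hσ w hw)
    have h2 := hLl _ (hwe w hw _ (hη w hw)) _ (hwe w hw _ (hξ w hw))
    have h3 : ‖conj (w * Complex.exp (η w)) - conj (w * Complex.exp (ξ w))‖ ≤ r * Real.exp M * C := by
      rw [← map_sub, RCLike.norm_conj, ← mul_sub, norm_mul]
      have hw' : ‖w‖ ≤ r := by simpa [hB] using (Metric.ball_subset_closedBall hw)
      have := bott_exp_lip (hη w hw) (hξ w hw)
      calc ‖w‖ * ‖Complex.exp (η w) - Complex.exp (ξ w)‖ ≤ r * (Real.exp M * ‖η w - ξ w‖) := by gcongr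
        _ ≤ r * (Real.exp M * C) := by gcongr; exact hC w hw
        _ = _ := by ring
    have hC0 : 0 ≤ C := (norm_nonneg _).trans h1
    have h4 : K * ‖conj (w * Complex.exp (η w)) - conj (w * Complex.exp (ξ w))‖ ≤ 1/2 * C := by
      calc _ ≤ K * (r * Real.exp M * C) := by gcongr
        _ = K * (r * Real.exp M) * C := by ring
        _ ≤ _ := by gcongr
    nlinarith
  set e : ℕ → ℂ → ℂ := fun n => T^[n] 0 with he
  have hes : ∀ n, e (n+1) = T (e n) := fun n => Function.iterate_succ_apply' T n 0
  have hinv : ∀ n, DifferentiableOn ℂ (e n) B ∧ (∀ w ∈ B, ‖e n w‖ ≤ M) := by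
    intro n
    induction n with
    | zero => exact ⟨by simp [he], by simpa [he] using fun _ _ => hM⟩
    | succ n ih => rw [hes]; exact hTd _ ih.1 ih.2
  have hgeo : ∀ n, ∀ w ∈ B, ‖e (n+1) w - e n w‖ ≤ M * (3/4)^n := by
    intro n
    induction n with
    | zero => intro w hw; have := (hinv 1).2 w hw; simpa [he] using this
    | succ n ih =>
      intro w hw
      have := hTc _ _ (hinv (n+1)).2 (hinv n).2 _ ih w hw
      rw [hes (n+1), hes n]
      rw [hes n] at this
      rw [pow_succ]; linarith
  have hgeo' : ∀ w ∈ B, ∀ n, dist (e n w) (e (n+1) w) ≤ M * (3/4)^n := by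
    intro w hw n; rw [dist_comm, dist_eq_norm]; exact hgeo n w hw
  have hlim : ∀ w, ∃ l, w ∈ B → Tendsto (fun n => e n w) atTop (𝓝 l) := by
    intro w
    by_cases hw : w ∈ B
    · obtain ⟨l, hl⟩ := cauchySeq_tendsto_of_complete
        (cauchySeq_of_le_geometric (3/4) M (by norm_num) (hgeo' w hw))
      exact ⟨l, fun _ => hl⟩
    · exact ⟨0, fun h => absurd h hw⟩
  choose η hη using hlim
  have hdist : ∀ n, ∀ w ∈ B, dist (e n w) (η w) ≤ M * (3/4)^n / (1 - 3/4) := fun n w hw =>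
    dist_le_of_le_geometric_of_tendsto (3/4) M (by norm_num) (hgeo' w hw) (hη w hw) n
  have hunif : TendstoUniformlyOn e η atTop B := by
    rw [Metric.tendstoUniformlyOn_iff]
    intro ε hε
    have : Tendsto (fun n : ℕ => M * (3/4:ℝ)^n / (1 - 3/4)) atTop (𝓝 0) := by
      have := (tendsto_pow_atTop_nhds_zero_of_lt_one (r := (3/4:ℝ)) (by norm_num) (by norm_num))
      simpa using (this.const_mul M).div_const (1 - 3/4)
    filter_upwards [this.eventually (gt_mem_nhds hε)] with n hn w hw
    rw [dist_comm]; exact (hdist n w hw).trans_lt hn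
  have hηd : DifferentiableOn ℂ η B :=
    hunif.tendstoLocallyUniformlyOn.differentiableOn (Eventually.of_forall fun n => (hinv n).1)
      Metric.isOpen_ball
  have hηb : ∀ w ∈ B, ‖η w‖ ≤ M := fun w hw =>
    le_of_tendsto (hη w hw).norm (Eventually.of_forall fun n => (hinv n).2 w hw)
  have hfix : ∀ w ∈ B, η w = T η w := by
    intro w hw
    refine tendsto_nhds_unique ((hη w hw).comp (tendsto_add_atTop_nat 1)) ?_
    have : Tendsto (fun n => T (e n) w) atTop (𝓝 (T η w)) := by
      have c1 := hη _ (hσ w hw)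
      have c2 := hη w hw
      have hLc : ContinuousAt L (conj (w * Complex.exp (η w))) :=
          (hLd.differentiableAt (Metric.isOpen_ball.mem_nhds (hwe w hw _ (hηb w hw)))).continuousAt
      have c3 : Tendsto (fun n => conj (w * Complex.exp (e n w))) atTop (𝓝 (conj (w * Complex.exp (η w)))) :=
        (Complex.continuous_conj.tendsto _).comp (c2.cexp.const_mul w)
      have c4 := hLc.tendsto.comp c3
      exact ((Complex.continuous_conj.tendsto _).comp (c1.sub c4)).div_const _
    refine this.congr fun n => ?_
    simp [hes]
  refine ⟨r, hr, by linarith, η, hηd, fun w hw => ?_⟩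
  have h := hfix w hw
  rw [hT, eq_div_iff hm0] at h
  have h2 := congrArg conj h
  simp only [map_mul, map_natCast, Complex.conj_conj] at h2
  have h3 : η ((conj w)^m) = m * conj (η w) + L (conj (w * Complex.exp (η w))) := by
    simp only [map_mul]
    linear_combination -h2
  rw [← hLe _ (hwe w hw _ (hηb w hw)), h3, Complex.exp_add, Complex.exp_nat_mul]
  simp only [map_mul, mul_pow, ← Complex.exp_conj]
  ring

/-- The data used in the proof. -/
structure BSetup (p : Polynomial ℂ) (f : ℂ → ℂ) (z₀ : ℂ) (A : Set ℂ) : Prop where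
  hf : ∀ z, f z = p.eval (conj z)
  deg : 0 < p.natDegree
  fix : f z₀ = z₀
  opn : IsOpen A
  mem : z₀ ∈ A
  maps : Set.MapsTo f A A
  clos : ∀ z ∈ closure A, f z ∈ A → z ∈ A
  crit : ∀ c ∈ A, c ≠ z₀ → p.derivative.eval (conj c) ≠ 0
  conn : IsPreconnected A
  conv : ∀ z ∈ A, Tendsto (fun n => f^[n] z) atTop (𝓝 z₀)

namespace BSetup

variable {p : Polynomial ℂ} {f : ℂ → ℂ} {z₀ : ℂ} {A : Set ℂ}

lemma cont (S : BSetup p f z₀ A) : Continuous f := by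
  have : f = fun z => p.eval (conj z) := funext S.hf
  rw [this]; exact p.continuous.comp Complex.continuous_conj

lemma covering (S : BSetup p f z₀ A) :
    IsCoveringMapOn (S.maps.restrict f A A) {x | x.1 ≠ z₀} := by
  have hfe : f = p.eval ∘ Complex.conjLIE.toHomeomorph := funext S.hf
  have hclf : IsClosedMap f := by
    rw [hfe]
    exact p.isClosedMap_eval.comp Complex.conjLIE.toHomeomorph.isClosedMap
  apply IsClosedMap.isCoveringMapOn_of_isLocalHomeomorphOn
  · intro C hC
    obtain ⟨C', hC', rfl⟩ := isClosed_induced_iff.1 hC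
    have h1 : IsClosed (f '' (closure A ∩ C')) := hclf _ (isClosed_closure.inter hC')
    refine isClosed_induced_iff.2 ⟨_, h1, ?_⟩
    ext x
    constructor
    · rintro ⟨y, ⟨hy1, hy2⟩, hy3⟩
      have hyA : y ∈ A := S.clos y hy1 (by rw [hy3]; exact x.2)
      exact ⟨⟨y, hyA⟩, hy2, Subtype.ext hy3⟩
    · rintro ⟨y, hy, rfl⟩
      exact ⟨y.1, ⟨subset_closure y.2, hy⟩, rfl⟩
  · intro x _
    have hfin : {z : ℂ | f z = x.1}.Finite := by
      have hne : p - Polynomial.C x.1 ≠ 0 := by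
        intro h
        have := S.deg
        rw [sub_eq_zero.1 h] at this
        simp at this
      have : {w : ℂ | (p - Polynomial.C x.1).IsRoot w}.Finite := Polynomial.finite_setOfPred_isRoot hne
      refine (this.preimage (f := fun z : ℂ => conj z) (star_injective.injOn)).subset ?_
      intro z hz
      simp only [Set.mem_ofPred_eq] at hz
      simp [Polynomial.IsRoot, ← S.hf, hz]
    refine (hfin.preimage (f := fun z : A => z.1) Subtype.val_injective.injOn).subset ?_
    rintro z hz
    exact congrArg Subtype.val hz
  · have hval : IsLocalHomeomorph (Subtype.val : A → ℂ) := S.opn.isOpenEmbedding_subtypeVal.isLocalHomeomorph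
    refine IsLocalHomeomorphOn.of_comp_left (g := (Subtype.val : A → ℂ)) ?_
      (hval.isLocalHomeomorphOn.mono (Set.subset_univ _)) ?_
    · have : (Subtype.val ∘ S.maps.restrict f A A) = (p.eval ∘ Complex.conjLIE.toHomeomorph) ∘ Subtype.val := by
        rw [← hfe]; rfl
      rw [this]
      have hp : IsLocalHomeomorphOn p.eval {k | p.derivative.eval k ≠ 0} := by
        intro x hx
        exact ⟨_, ((p.hasStrictDerivAt x).hasStrictFDerivAt_equiv hx).mem_toOpenPartialHomeomorph_source, by simp⟩
      refine IsLocalHomeomorphOn.comp (t := {k | p.derivative.eval (conj k) ≠ 0})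
        (IsLocalHomeomorphOn.comp hp (Complex.conjLIE.toHomeomorph.isLocalHomeomorph.isLocalHomeomorphOn.mono (Set.subset_univ _)) ?_) 
        (hval.isLocalHomeomorphOn.mono (Set.subset_univ _)) ?_
      · intro k hk; exact hk
      · intro k hk
        refine S.crit k.1 k.2 ?_
        intro h
        apply hk
        change f k.1 = z₀
        rw [h, S.fix]
    · exact fun x _ => (S.cont.continuousOn.mapsToRestrict S.maps).continuousAt

lemma lift (S : BSetup p f z₀ A) {U : Set ℂ} (hU : IsOpen U) (hUc : Convex ℝ U) {g : ℂ → ℂ}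
    (hg : ContinuousOn g U) (hgA : ∀ s ∈ U, g s ∈ A ∧ g s ≠ z₀) {a e : ℂ} (ha : a ∈ U)
    (he : e ∈ A) (hae : f e = g a) :
    ∃ G : ℂ → ℂ, ContinuousOn G U ∧ (∀ s ∈ U, G s ∈ A ∧ f (G s) = g s) ∧ G a = e := by
  classical
  have : ContractibleSpace U := hUc.contractibleSpace ⟨a, ha⟩
  have := hU.locallyPathConnectedSpace
  obtain ⟨F, ⟨hF1, hF2⟩, -⟩ := S.covering.existsUnique_continuousMap_lifts (A := U)
    ⟨fun s => (⟨g s, (hgA s s.2).1⟩ : A), by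
      exact (continuousOn_iff_continuous_domRestrict.1 hg).subtype_mk _⟩
    (a₀ := ⟨a, ha⟩) (e₀ := ⟨e, he⟩) (Subtype.ext hae) (fun s => (hgA s s.2).2)
  refine ⟨fun z => if hz : z ∈ U then (F ⟨z, hz⟩).1 else 0, ?_, ?_, ?_⟩
  · rw [continuousOn_iff_continuous_domRestrict]
    convert! continuous_subtype_val.comp F.continuous using 1
    ext z
    simp
  · intro s hs
    simp only [hs, dif_pos]
    refine ⟨Subtype.prop _, ?_⟩
    exact congrArg Subtype.val (congrFun hF2 ⟨s, hs⟩)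
  · simp [ha, hF1]

lemma diff_lift {K Ψ : ℂ → ℂ} {s : ℂ} (hK : ContinuousAt K s) (hc : p.derivative.eval (K s) ≠ 0)
    (hΨ : DifferentiableAt ℂ Ψ s) (he : ∀ᶠ x in 𝓝 s, p.eval (K x) = Ψ x) :
    DifferentiableAt ℂ K s := by
  have hs := p.hasStrictDerivAt (K s)
  have h1 := hs.to_localInverse hc
  have h2 := hs.eventually_left_inverse hc
  have h3 := hK.eventually h2
  rw [he.self_of_nhds] at h1
  refine (DifferentiableAt.comp s h1.hasDerivAt.differentiableAt hΨ).congr_of_eventuallyEq ?_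
  filter_upwards [h3, he] with x hx hx2
  rw [Function.comp_apply, ← hx2, hx]

lemma uniq (S : BSetup p f z₀ A) {U : Set ℂ} (hU : IsOpen U) (hUc : IsPreconnected U)
    {G H : ℂ → ℂ} (hG : DifferentiableOn ℂ G U) (hH : DifferentiableOn ℂ H U)
    (hGH : ∀ s ∈ U, f (G s) = f (H s)) {a : ℂ} (ha : a ∈ U) (hGA : G a ∈ A) (hne : G a ≠ z₀)
    (hea : G a = H a) : Set.EqOn G H U := by
  refine (hG.analyticOnNhd hU).eqOn_of_preconnected_of_eventuallyEq (hH.analyticOnNhd hU) hUc ha ?_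
  have hc := S.crit _ hGA hne
  have hs := p.hasStrictDerivAt (conj (G a))
  have h2 := hs.eventually_left_inverse hc
  have cG : ContinuousAt (fun x => conj (G x)) a :=
    Complex.continuous_conj.continuousAt.comp (hG.differentiableAt (hU.mem_nhds ha)).continuousAt
  have cH : Tendsto (fun x => conj (H x)) (𝓝 a) (𝓝 (conj (G a))) := by
    rw [hea]
    exact Complex.continuous_conj.continuousAt.comp (hH.differentiableAt (hU.mem_nhds ha)).continuousAt
  filter_upwards [cG.eventually h2, cH.eventually h2, hU.mem_nhds ha] with x h3 h4 h5
  have := hGH x h5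
  rw [S.hf, S.hf] at this
  apply star_injective
  change conj (G x) = conj (H x)
  rw [← h3, ← h4, this]

end BSetup

/-- Open left half plane. -/
def BHP (t : ℝ) : Set ℂ := {s : ℂ | s.re < t}

lemma bHP_open (t : ℝ) : IsOpen (BHP t) := isOpen_lt Complex.continuous_re continuous_const
lemma bHP_convex (t : ℝ) : Convex ℝ (BHP t) := convex_halfSpace_re_lt t
lemma bHP_preconn (t : ℝ) : IsPreconnected (BHP t) := (bHP_convex t).isPreconnected

/-- `Φ` is a Boettcher parametrization on the half plane `re < t`, extending `Φ₀`. -/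
structure BGood (f : ℂ → ℂ) (z₀ : ℂ) (A : Set ℂ) (m : ℕ) (t₀ : ℝ) (Φ₀ : ℂ → ℂ) (t : ℝ)
    (Φ : ℂ → ℂ) : Prop where
  diff : DifferentiableOn ℂ Φ (BHP t)
  mem : ∀ s, s.re < t → Φ s ∈ A
  ne : ∀ s, s.re < t → Φ s ≠ z₀
  eqn : ∀ s, s.re < t → f (Φ s) = Φ (m * conj s)
  ext : ∀ s, s.re < t₀ → Φ s = Φ₀ s

namespace BSetup

variable {p : Polynomial ℂ} {f : ℂ → ℂ} {z₀ : ℂ} {A : Set ℂ}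

lemma good_uniq {m : ℕ} {t₀ : ℝ} {Φ₀ Φ Φ' : ℂ → ℂ} {t t' : ℝ}
    (h : BGood f z₀ A m t₀ Φ₀ t Φ) (h' : BGood f z₀ A m t₀ Φ₀ t' Φ') (ht : t₀ ≤ t) (htt : t ≤ t')
    {s : ℂ} (hs : s.re < t) : Φ s = Φ' s := by
  have hd : DifferentiableOn ℂ Φ' (BHP t) := h'.diff.mono fun s hs => lt_of_lt_of_le hs htt
  have ha : ((t₀ - 1 : ℝ) : ℂ) ∈ BHP t := by simp [BHP]; linarith
  refine (h.diff.analyticOnNhd (bHP_open t)).eqOn_of_preconnected_of_eventuallyEq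
    (hd.analyticOnNhd (bHP_open t)) (bHP_preconn t) ha ?_ hs
  have : BHP t₀ ∈ 𝓝 ((t₀ - 1 : ℝ) : ℂ) := (bHP_open t₀).mem_nhds (by simp [BHP])
  filter_upwards [this] with x hx
  rw [h.ext x hx, h'.ext x hx]

lemma good_step (S : BSetup p f z₀ A) {m : ℕ} (hm : 2 ≤ m) {t₀ : ℝ} {Φ₀ Φ : ℂ → ℂ} {t : ℝ}
    (h : BGood f z₀ A m t₀ Φ₀ t Φ) (ht0 : t₀ ≤ t) (ht : t < 0) :
    ∃ Φ', BGood f z₀ A m t₀ Φ₀ (t / m) Φ' := by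
  have hmR : (2:ℝ) ≤ m := by exact_mod_cast hm
  have hre : ∀ s : ℂ, ((m:ℂ) * conj s).re = m * s.re := by intro s; simp
  have hlt : ∀ s : ℂ, s.re < t / m → ((m:ℂ) * conj s).re < t := by
    intro s hs
    rw [hre]; rw [lt_div_iff₀ (by linarith)] at hs; linarith
  have htt : t ≤ t / m := by rw [le_div_iff₀ (by linarith)]; nlinarith
  have hlt' : ∀ s : ℂ, s.re < t → ((m:ℂ) * conj s).re < t := fun s hs => hlt s (hs.trans_le htt)
  set a : ℂ := ((t₀ - 1 : ℝ) : ℂ) with ha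
  have hat0 : a.re < t₀ := by simp [ha]
  have hat : a.re < t := hat0.trans_le ht0
  have hcj : Continuous fun s : ℂ => (m:ℂ) * conj s := continuous_const.mul Complex.continuous_conj
  obtain ⟨G, hGc, hGA, hGa⟩ := S.lift (bHP_open (t/m)) (bHP_convex _) (g := fun s => Φ (m * conj s))
    (h.diff.continuousOn.comp hcj.continuousOn fun s hs => hlt s hs)
    (fun s hs => ⟨h.mem _ (hlt s hs), h.ne _ (hlt s hs)⟩) (a := a) (e := Φ a)
    (lt_of_lt_of_le hat htt) (h.mem a hat) (h.eqn a hat)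
  have hGne : ∀ s, s.re < t/m → G s ≠ z₀ := by
    intro s hs hG
    have := (hGA s hs).2
    rw [hG, S.fix] at this
    exact h.ne _ (hlt s hs) this.symm
  have hGd : DifferentiableOn ℂ G (BHP (t/m)) := by
    intro s hs
    have hmem : BHP (t/m) ∈ 𝓝 s := (bHP_open _).mem_nhds hs
    have hmem' : ∀ᶠ x in 𝓝 (conj s), conj x ∈ BHP (t/m) := by
      have : Tendsto (fun x : ℂ => conj x) (𝓝 (conj s)) (𝓝 s) := by
        simpa using Complex.continuous_conj.tendsto (conj s)
      exact this.eventually hmem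
    have h1 : DifferentiableAt ℂ (conj ∘ G ∘ conj) (conj s) := by
      refine diff_lift (p := p) (Ψ := fun x => Φ (m * x)) ?_ ?_ ?_ ?_
      · have : ContinuousAt G (conj (conj s)) := by
          rw [Complex.conj_conj]; exact hGc.continuousAt hmem
        exact Complex.continuous_conj.continuousAt.comp (this.comp Complex.continuous_conj.continuousAt)
      · simp only [Function.comp_apply, Complex.conj_conj]
        exact S.crit _ (hGA s hs).1 (hGne s hs)
      · have : DifferentiableAt ℂ Φ (m * conj s) :=
          h.diff.differentiableAt ((bHP_open t).mem_nhds (hlt s hs))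
        exact DifferentiableAt.comp (conj s) this (by fun_prop)
      · filter_upwards [hmem'] with x hx
        have := (hGA _ hx).2
        rw [S.hf, Complex.conj_conj] at this
        exact this
    have h2 := h1.conj_conj
    rw [Complex.conj_conj] at h2
    refine (h2.congr_of_eventuallyEq (Eventually.of_forall fun x => ?_)).differentiableWithinAt
    simp
  have hEq : Set.EqOn Φ G (BHP t) := by
    refine S.uniq (bHP_open t) (bHP_preconn t) h.diff (hGd.mono fun s hs => lt_of_lt_of_le hs htt) ?_
      (a := a) hat (h.mem a hat) (h.ne a hat) hGa.symm
    intro s hs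
    rw [(hGA s (lt_of_lt_of_le hs htt)).2, h.eqn s hs]
  refine ⟨G, hGd, fun s hs => (hGA s hs).1, hGne, fun s hs => ?_, fun s hs => ?_⟩
  · rw [(hGA s hs).2]; exact hEq (hlt s hs)
  · rw [← hEq (lt_of_lt_of_le hs ht0), h.ext s hs]

lemma good_global (S : BSetup p f z₀ A) {m : ℕ} (hm : 2 ≤ m) {t₀ : ℝ} {Φ₀ : ℂ → ℂ}
    (h : BGood f z₀ A m t₀ Φ₀ t₀ Φ₀) (ht : t₀ < 0) :
    ∃ Φ, BGood f z₀ A m t₀ Φ₀ 0 Φ := by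
  have hmR : (2:ℝ) ≤ m := by exact_mod_cast hm
  have hneg : ∀ n : ℕ, t₀ / (m:ℝ)^n < 0 := fun n => div_neg_of_neg_of_pos ht (by positivity)
  have hmono : ∀ n k : ℕ, n ≤ k → t₀ / (m:ℝ)^n ≤ t₀ / (m:ℝ)^k := by
    intro n k hnk
    have : (m:ℝ)^n ≤ (m:ℝ)^k := pow_le_pow_right₀ (by linarith) hnk
    rw [div_le_div_iff₀ (by positivity) (by positivity)]
    nlinarith
  have hge : ∀ n : ℕ, t₀ ≤ t₀ / (m:ℝ)^n := fun n => by simpa using hmono 0 n (Nat.zero_le _)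
  have hex : ∀ n : ℕ, ∃ Φ, BGood f z₀ A m t₀ Φ₀ (t₀ / (m:ℝ)^n) Φ := by
    intro n
    induction n with
    | zero => exact ⟨Φ₀, by simpa using h⟩
    | succ n ih =>
      obtain ⟨Φ, hΦ⟩ := ih
      obtain ⟨Φ', hΦ'⟩ := S.good_step hm hΦ (hge n) (hneg n)
      refine ⟨Φ', ?_⟩
      rwa [pow_succ, ← div_div]
  choose F hF using hex
  have hlim : Tendsto (fun n : ℕ => t₀ / (m:ℝ)^n) atTop (𝓝 0) :=
    tendsto_const_nhds.div_atTop (tendsto_pow_atTop_atTop_of_one_lt (by linarith))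
  have hN : ∀ s : ℂ, ∃ n : ℕ, s.re < 0 → s.re < t₀ / (m:ℝ)^n := by
    intro s
    by_cases hs : s.re < 0
    · obtain ⟨n, hn⟩ := (hlim.eventually (lt_mem_nhds hs)).exists
      exact ⟨n, fun _ => hn⟩
    · exact ⟨0, fun h => absurd h hs⟩
  choose N hN using hN
  have hag : ∀ n k (s : ℂ), s.re < t₀ / (m:ℝ)^n → s.re < t₀ / (m:ℝ)^k → F n s = F k s := by
    intro n k s h1 h2
    rcases le_total n k with hnk | hnk
    · exact good_uniq (hF n) (hF k) (hge n) (hmono _ _ hnk) h1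
    · exact (good_uniq (hF k) (hF n) (hge k) (hmono _ _ hnk) h2).symm
  set Φ : ℂ → ℂ := fun s => F (N s) s with hΦ
  have hval : ∀ n (s : ℂ), s.re < t₀ / (m:ℝ)^n → Φ s = F n s := fun n s hs =>
    hag _ _ s (hN s (hs.trans (hneg n))) hs
  refine ⟨Φ, ?_, ?_, ?_, ?_, ?_⟩
  · intro s hs
    have h1 := hN s hs
    have hmem : BHP (t₀ / (m:ℝ)^(N s)) ∈ 𝓝 s := (bHP_open _).mem_nhds h1
    refine (((hF (N s)).diff.differentiableAt hmem).congr_of_eventuallyEq ?_).differentiableWithinAt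
    filter_upwards [hmem] with x hx using hval _ x hx
  · exact fun s hs => (hF (N s)).mem s (hN s hs)
  · exact fun s hs => (hF (N s)).ne s (hN s hs)
  · intro s hs
    have h1 := hN s hs
    rw [hval (N s) s h1, (hF (N s)).eqn s h1, hval (N s)]
    have : ((m:ℂ) * conj s).re = m * s.re := by simp
    rw [this]; nlinarith
  · intro s hs
    rw [hval 0 s (by simpa using hs), (hF 0).ext s hs]

lemma good_periodic {m : ℕ} {t₀ : ℝ} {Φ₀ Φ : ℂ → ℂ} (ht : t₀ < 0)
    (h : BGood f z₀ A m t₀ Φ₀ 0 Φ) (hΦ₀ : ∀ a b : ℂ, Complex.exp a = Complex.exp b → Φ₀ a = Φ₀ b)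
    {a b : ℂ} (hab : Complex.exp a = Complex.exp b) (ha : a.re < 0) : Φ a = Φ b := by
  have hre : a.re = b.re := by
    have := congrArg norm hab
    rwa [Complex.norm_exp, Complex.norm_exp, Real.exp_eq_exp] at this
  set c := b - a with hc
  have hc0 : c.re = 0 := by simp [hc, hre]
  have hec : ∀ s, Complex.exp s = Complex.exp (s + c) := by
    intro s
    rw [Complex.exp_add, hc, Complex.exp_sub, hab, div_self (Complex.exp_ne_zero _), mul_one]
  have hmaps : ∀ s : ℂ, s ∈ BHP 0 → s + c ∈ BHP 0 := by
    intro s hs; simpa [BHP, hc0] using hs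
  have hd : DifferentiableOn ℂ (fun s => Φ (s + c)) (BHP 0) :=
    h.diff.comp (by fun_prop) hmaps
  have hEq : Set.EqOn Φ (fun s => Φ (s + c)) (BHP 0) := by
    refine (h.diff.analyticOnNhd (bHP_open 0)).eqOn_of_preconnected_of_eventuallyEq
      (hd.analyticOnNhd (bHP_open 0)) (bHP_preconn 0) (z₀ := ((t₀ - 1 : ℝ) : ℂ))
      (by simp [BHP]; linarith) ?_
    have : BHP t₀ ∈ 𝓝 ((t₀ - 1 : ℝ) : ℂ) := (bHP_open t₀).mem_nhds (by simp [BHP])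
    filter_upwards [this] with x hx
    rw [h.ext x hx, h.ext (x + c) (by simpa [BHP, hc0] using hx)]
    exact hΦ₀ _ _ (hec x)
  have := hEq (x := a) ha
  simpa [hc] using this

lemma good_inj (S : BSetup p f z₀ A) {m : ℕ} (hm : 2 ≤ m) {t₀ : ℝ} {Φ₀ Φ : ℂ → ℂ} (ht : t₀ < 0)
    (h : BGood f z₀ A m t₀ Φ₀ 0 Φ) (hΦ₀ : ∀ a b : ℂ, Complex.exp a = Complex.exp b → Φ₀ a = Φ₀ b)
    (hinj : ∀ a b : ℂ, a.re < t₀ → b.re < t₀ → Φ₀ a = Φ₀ b → Complex.exp a = Complex.exp b)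
    {a b : ℂ} (ha : a.re < 0) (hb : b.re < 0) (hab : Φ a = Φ b) :
    Complex.exp a = Complex.exp b := by
  have hmR : (2:ℝ) ≤ m := by exact_mod_cast hm
  have hm0 : (m:ℂ) ≠ 0 := by norm_cast; omega
  have hre : ∀ s : ℂ, ((m:ℂ) * conj s).re = m * s.re := by intro s; simp
  have key : ∀ n : ℕ, ∀ a b : ℂ, a.re < t₀ / (m:ℝ)^n → b.re < t₀ / (m:ℝ)^n → Φ a = Φ b →
      Complex.exp a = Complex.exp b := by
    intro n
    induction n with
    | zero =>
      intro a b ha hb hab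
      simp only [pow_zero, div_one] at ha hb
      rw [h.ext a ha, h.ext b hb] at hab
      exact hinj a b ha hb hab
    | succ n ih =>
      intro a b ha hb hab
      have hneg : t₀ / (m:ℝ)^(n+1) < 0 := div_neg_of_neg_of_pos ht (by positivity)
      have hlt : ∀ s : ℂ, s.re < t₀ / (m:ℝ)^(n+1) → ((m:ℂ) * conj s).re < t₀ / (m:ℝ)^n := by
        intro s hs
        rw [hre]; rw [pow_succ, ← div_div, lt_div_iff₀ (by linarith)] at hs; linarith
      have e1 : Complex.exp (m * conj a) = Complex.exp (m * conj b) := by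
        refine ih _ _ (hlt a ha) (hlt b hb) ?_
        rw [← h.eqn a (ha.trans hneg), ← h.eqn b (hb.trans hneg), hab]
      have hre' : a.re = b.re := by
        have := congrArg norm e1
        rw [Complex.norm_exp, Complex.norm_exp, Real.exp_eq_exp, hre, hre] at this
        exact mul_left_cancel₀ (by linarith) this
      set c := b - a with hc
      have hc0 : c.re = 0 := by simp [hc, hre']
      have hec : ∀ s, Complex.exp (m * conj s) = Complex.exp (m * conj (s + c)) := by
        intro s
        rw [map_add, mul_add, Complex.exp_add, hc, map_sub, mul_sub, Complex.exp_sub, e1,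
          div_self (Complex.exp_ne_zero _), mul_one]
      have hmaps : ∀ s : ℂ, s ∈ BHP 0 → s + c ∈ BHP 0 := by
        intro s hs; simpa [BHP, hc0] using hs
      have hd : DifferentiableOn ℂ (fun s => Φ (s + c)) (BHP 0) :=
        h.diff.comp (by fun_prop) hmaps
      have hEq : Set.EqOn Φ (fun s => Φ (s + c)) (BHP 0) := by
        refine S.uniq (bHP_open 0) (bHP_preconn 0) h.diff hd ?_ (a := a) (ha.trans hneg)
          (h.mem a (ha.trans hneg)) (h.ne a (ha.trans hneg)) (by simpa [hc] using hab)
        intro s hs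
        change f (Φ s) = f (Φ (s + c))
        rw [h.eqn s hs, h.eqn _ (hmaps s hs)]
        refine good_periodic ht h hΦ₀ (hec s) ?_
        rw [hre]; have : s.re < 0 := hs
        nlinarith
      have hx := hEq (x := ((t₀ - 1 : ℝ) : ℂ)) (by simp [BHP]; linarith)
      have h1 : ((t₀ - 1 : ℝ) : ℂ).re < t₀ := by simp
      have h2 : (((t₀ - 1 : ℝ) : ℂ) + c).re < t₀ := by simp [hc0]
      simp only at hx
      rw [h.ext _ h1, h.ext _ h2] at hx
      have h3 := hinj _ _ h1 h2 hx
      rw [Complex.exp_add] at h3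
      have h4 : Complex.exp c = 1 := by
        have := Complex.exp_ne_zero ((t₀ - 1 : ℝ) : ℂ)
        exact mul_left_cancel₀ this (by rw [← h3, mul_one])
      rw [hc, Complex.exp_sub, div_eq_one_iff_eq (Complex.exp_ne_zero _)] at h4
      exact h4.symm
  have hlim : Tendsto (fun n : ℕ => t₀ / (m:ℝ)^n) atTop (𝓝 0) :=
    tendsto_const_nhds.div_atTop (tendsto_pow_atTop_atTop_of_one_lt (by linarith))
  obtain ⟨n, hn1, hn2⟩ := ((hlim.eventually (lt_mem_nhds ha)).and (hlim.eventually (lt_mem_nhds hb))).exists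
  exact key n a b hn1 hn2 hab

end BSetup

lemma bott_setup (p : Polynomial ℂ) (hdeg : 0 < p.natDegree)
    (f : ℂ → ℂ) (hf : ∀ z, f z = p.eval (conj z))
    (z₀ : ℂ) (hfix : f z₀ = z₀) (hcrit0 : p.derivative.eval (conj z₀) = 0)
    (A : Set ℂ)
    (hA : A = connectedComponentIn {z : ℂ | Tendsto (fun n => f^[n] z) atTop (𝓝 z₀)} z₀)
    (honlycrit : ∀ c ∈ A, p.derivative.eval (conj c) = 0 → c = z₀) :
    BSetup p f z₀ A := by
  set B := {z : ℂ | Tendsto (fun n => f^[n] z) atTop (𝓝 z₀)} with hB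
  have hcont : Continuous f := by
    have : f = fun z => p.eval (conj z) := funext hf
    rw [this]; exact p.continuous.comp Complex.continuous_conj
  obtain ⟨δ, hδ, hcontr⟩ : ∃ δ > 0, ∀ z ∈ Metric.ball z₀ δ, ‖f z - z₀‖ ≤ 1/2 * ‖z - z₀‖ := by
    have h1 : HasDerivAt (fun x => p.eval x) 0 (conj z₀) := by
      rw [← hcrit0]; exact p.hasDerivAt _
    have h2 := (hasDerivAt_iff_isLittleO.1 h1).def (c := 1/2) (by norm_num)
    have h3 := Complex.continuous_conj.continuousAt.eventually h2
    obtain ⟨δ, hδ, H⟩ := Metric.eventually_nhds_iff_ball.1 h3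
    refine ⟨δ, hδ, fun z hz => ?_⟩
    have := H z hz
    rw [smul_zero, sub_zero, ← hf, ← hf, hfix, ← map_sub, RCLike.norm_conj] at this
    exact this
  have hiter : ∀ n, ∀ z ∈ Metric.ball z₀ δ, ‖f^[n] z - z₀‖ ≤ (1/2)^n * ‖z - z₀‖ := by
    intro n z hz
    induction n with
    | zero => simp
    | succ n ih =>
      rw [Function.iterate_succ_apply']
      have h1 : ‖f^[n] z - z₀‖ ≤ ‖z - z₀‖ := by
        refine ih.trans (mul_le_of_le_one_left (norm_nonneg _) ?_)
        exact pow_le_one₀ (by norm_num) (by norm_num)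
      have h2 : f^[n] z ∈ Metric.ball z₀ δ := by
        rw [mem_ball_iff_norm] at hz ⊢; exact h1.trans_lt hz
      have := hcontr _ h2
      rw [pow_succ]; linarith
  have hball : Metric.ball z₀ δ ⊆ B := by
    intro z hz
    change Tendsto (fun n => f^[n] z) atTop (𝓝 z₀)
    rw [tendsto_iff_norm_sub_tendsto_zero]
    refine squeeze_zero (fun _ => norm_nonneg _) (fun n => hiter n z hz) ?_
    have := (tendsto_pow_atTop_nhds_zero_of_lt_one (r := (1/2:ℝ)) (by norm_num) (by norm_num))
    simpa using this.mul_const ‖z - z₀‖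
  have hshift : ∀ n z, f^[n] z ∈ B ↔ z ∈ B := by
    intro n z
    change Tendsto (fun k => f^[k] (f^[n] z)) atTop (𝓝 z₀) ↔ Tendsto (fun k => f^[k] z) atTop (𝓝 z₀)
    rw [← tendsto_add_atTop_iff_nat (f := fun k => f^[k] z) n]
    simp only [Function.iterate_add_apply]
  have hBo : IsOpen B := by
    rw [isOpen_iff_mem_nhds]
    intro z hz
    have hz' : Tendsto (fun n => f^[n] z) atTop (𝓝 z₀) := hz
    obtain ⟨n, hn⟩ := (hz'.eventually (Metric.ball_mem_nhds z₀ hδ)).exists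
    have := (hcont.iterate n).continuousAt.eventually (Metric.isOpen_ball.mem_nhds hn)
    filter_upwards [this] with x hx
    exact (hshift n x).1 (hball hx)
  have hz₀B : z₀ ∈ B := hball (Metric.mem_ball_self hδ)
  have hAB : A ⊆ B := by rw [hA]; exact connectedComponentIn_subset _ _
  have hz₀A : z₀ ∈ A := by rw [hA]; exact mem_connectedComponentIn hz₀B
  have hAc : IsPreconnected A := by rw [hA]; exact isPreconnected_connectedComponentIn
  have hmax : ∀ s, IsPreconnected s → z₀ ∈ s → s ⊆ B → s ⊆ A := by
    intro s h1 h2 h3; rw [hA]; exact h1.subset_connectedComponentIn h2 h3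
  refine ⟨hf, hdeg, hfix, ?_, hz₀A, ?_, ?_, fun c hc hne h => hne (honlycrit c hc h), hAc, fun z hz => hAB hz⟩
  · rw [hA]; exact hBo.connectedComponentIn
  · have := hmax (f '' A) (hAc.image f hcont.continuousOn) ⟨z₀, hz₀A, hfix⟩ (by
      rintro _ ⟨z, hz, rfl⟩
      exact (hshift 1 z).2 (hAB hz))
    exact fun z hz => this ⟨z, hz, rfl⟩
  · intro z hz hfz
    have hzB : z ∈ B := (hshift 1 z).1 (hAB hfz)
    have := hmax (insert z A) (hAc.subset_closure (Set.subset_insert _ _)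
      (Set.insert_subset hz subset_closure)) (Set.mem_insert_of_mem _ hz₀A)
      (Set.insert_subset hzB hAB)
    exact this (Set.mem_insert _ _)

lemma BSetup.start {p : Polynomial ℂ} {f : ℂ → ℂ} {z₀ : ℂ} {A : Set ℂ} (S : BSetup p f z₀ A)
    (m : ℕ) (hm : 2 ≤ m) (hmdef : m = (p - Polynomial.C z₀).rootMultiplicity (conj z₀)) :
    ∃ r : ℝ, 0 < r ∧ r < 1 ∧ ∃ φ₀ : ℂ → ℂ, DifferentiableOn ℂ φ₀ (Metric.ball 0 r) ∧
      φ₀ 0 = z₀ ∧ Set.InjOn φ₀ (Metric.ball 0 r) ∧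
      (∀ w ∈ Metric.ball (0:ℂ) r, φ₀ w ∈ A ∧ f (φ₀ w) = φ₀ ((conj w)^m)) := by
  have hne : p - Polynomial.C z₀ ≠ 0 := by
    intro h
    have := S.deg
    rw [sub_eq_zero.1 h] at this
    simp at this
  obtain ⟨q, hq1, hq2⟩ := Polynomial.exists_eq_pow_rootMultiplicity_mul_and_not_dvd _ hne (conj z₀)
  rw [← hmdef] at hq1
  have hq0 : q.eval (conj z₀) ≠ 0 := by
    intro h; exact hq2 (Polynomial.dvd_iff_isRoot.2 h)
  set Q : ℂ → ℂ := fun v => q.eval (conj z₀ + v) with hQ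
  have hQa : AnalyticAt ℂ Q 0 := by
    have : Differentiable ℂ Q := q.differentiable.comp (by fun_prop : Differentiable ℂ fun v => conj z₀ + v)
    exact this.analyticAt 0
  have hfQ : ∀ u, f (z₀ + u) = z₀ + (conj u)^m * Q (conj u) := by
    intro u
    have := congrArg (fun P => P.eval (conj (z₀ + u))) hq1
    simp only [Polynomial.eval_sub, Polynomial.eval_C, Polynomial.eval_mul, Polynomial.eval_pow,
      Polynomial.eval_X] at this
    rw [← S.hf, map_add, add_sub_cancel_left] at this
    rw [hQ]
    linear_combination this
  obtain ⟨r, hr, hr1, η, hη, heq⟩ := bott_local Q hQa (by simpa [hQ] using hq0) m hm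
  set g : ℂ → ℂ := fun w => w * Complex.exp (η w) with hg
  have hgd : DifferentiableOn ℂ g (Metric.ball 0 r) := differentiableOn_id.mul hη.cexp
  have hg0 : g 0 = 0 := by simp [hg]
  have h0 : Metric.ball (0:ℂ) r ∈ 𝓝 0 := Metric.ball_mem_nhds _ hr
  have hga : AnalyticAt ℂ g 0 := hgd.analyticAt h0
  have hder : HasDerivAt g (Complex.exp (η 0)) 0 := by
    have := (hasDerivAt_id (0:ℂ)).mul (hη.differentiableAt h0).hasDerivAt.cexp
    simpa [hg] using! this
  have hst : HasStrictDerivAt g (Complex.exp (η 0)) 0 := by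
    have := hga.hasStrictDerivAt
    rwa [hder.deriv] at this
  have hinv := hst.eventually_left_inverse (Complex.exp_ne_zero _)
  have hmemA : ∀ᶠ w in 𝓝 (0:ℂ), z₀ + g w ∈ A := by
    have : ContinuousAt (fun w => z₀ + g w) 0 := continuousAt_const.add hga.continuousAt
    exact this.eventually (S.opn.mem_nhds (by simpa [hg0] using S.mem))
  obtain ⟨ε, hε, H⟩ := Metric.eventually_nhds_iff_ball.1 (hinv.and hmemA)
  have hsub : Metric.ball (0:ℂ) (min r ε) ⊆ Metric.ball 0 r := Metric.ball_subset_ball (min_le_left _ _)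
  have hsub' : Metric.ball (0:ℂ) (min r ε) ⊆ Metric.ball 0 ε := Metric.ball_subset_ball (min_le_right _ _)
  refine ⟨min r ε, lt_min hr hε, (min_le_left _ _).trans_lt hr1, fun w => z₀ + g w,
    (hgd.mono hsub).const_add z₀, by simp [hg0], ?_, ?_⟩
  · intro a ha b hb hab
    rw [← (H a (hsub' ha)).1, ← (H b (hsub' hb)).1, add_left_cancel hab]
  · intro w hw
    refine ⟨(H w (hsub' hw)).2, ?_⟩
    simp only
    rw [hfQ]
    exact congrArg (z₀ + ·) (heq w (hsub hw)).symm

lemma BSetup.final {p : Polynomial ℂ} {f : ℂ → ℂ} {z₀ : ℂ} {A : Set ℂ} (S : BSetup p f z₀ A)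
    (m : ℕ) (hm : 2 ≤ m) (hmdef : m = (p - Polynomial.C z₀).rootMultiplicity (conj z₀)) :
    ∃ φ : ℂ → ℂ, DifferentiableOn ℂ φ (Metric.ball (0 : ℂ) 1) ∧
      Set.InjOn φ (Metric.ball (0 : ℂ) 1) ∧ φ 0 = z₀ ∧
      φ '' Metric.ball (0 : ℂ) 1 = A ∧
      ∀ w ∈ Metric.ball (0 : ℂ) 1, f (φ w) = φ ((conj w)^m) := by
  obtain ⟨r, hr, hr1, φ₀, hd₀, h00, hi₀, hA₀⟩ := S.start m hm hmdef
  set t₀ := Real.log r with ht₀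
  have ht : t₀ < 0 := Real.log_neg hr hr1
  have hball : ∀ s : ℂ, s.re < t₀ ↔ Complex.exp s ∈ Metric.ball (0:ℂ) r := by
    intro s
    rw [mem_ball_zero_iff, Complex.norm_exp, ht₀, Real.lt_log_iff_exp_lt hr]
  have hball1 : ∀ s : ℂ, s.re < 0 ↔ Complex.exp s ∈ Metric.ball (0:ℂ) 1 := by
    intro s
    rw [mem_ball_zero_iff, Complex.norm_exp, Real.exp_lt_one_iff]
  have hmc : ∀ s : ℂ, Complex.exp (m * conj s) = (conj (Complex.exp s))^m := by
    intro s; rw [Complex.exp_nat_mul, Complex.exp_conj]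
  have hgood0 : BGood f z₀ A m t₀ (fun s => φ₀ (Complex.exp s)) t₀ (fun s => φ₀ (Complex.exp s)) := by
    refine ⟨?_, fun s hs => (hA₀ _ ((hball s).1 hs)).1, ?_, ?_, fun _ _ => rfl⟩
    · exact hd₀.comp Complex.differentiable_exp.differentiableOn fun s hs => (hball s).1 hs
    · intro s hs h
      rw [← h00] at h
      exact Complex.exp_ne_zero s (hi₀ ((hball s).1 hs) (Metric.mem_ball_self hr) h)
    · intro s hs
      rw [hmc]; exact (hA₀ _ ((hball s).1 hs)).2
  obtain ⟨Φ, hΦ⟩ := S.good_global hm hgood0 ht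
  have hper : ∀ a b : ℂ, Complex.exp a = Complex.exp b → a.re < 0 → Φ a = Φ b := fun a b hab ha =>
    BSetup.good_periodic ht hΦ (fun a b h => congrArg φ₀ h) hab ha
  have hinj : ∀ a b : ℂ, a.re < 0 → b.re < 0 → Φ a = Φ b → Complex.exp a = Complex.exp b :=
    fun a b ha hb hab => S.good_inj hm ht hΦ (fun a b h => congrArg φ₀ h)
      (fun a b ha hb h => hi₀ ((hball a).1 ha) ((hball b).1 hb) h) ha hb hab
  set φ : ℂ → ℂ := fun w => if w = 0 then z₀ else Φ (Complex.log w) with hφ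
  have hφ0 : φ 0 = z₀ := by simp [hφ]
  have hφe : ∀ s : ℂ, s.re < 0 → φ (Complex.exp s) = Φ s := by
    intro s hs
    simp only [hφ, Complex.exp_ne_zero, if_false]
    exact (hper _ _ (Complex.exp_log (Complex.exp_ne_zero s)).symm hs).symm
  have hsurj : ∀ w ∈ Metric.ball (0:ℂ) 1, w ≠ 0 → ∃ s : ℂ, s.re < 0 ∧ Complex.exp s = w := by
    intro w hw h0
    refine ⟨Complex.log w, ?_, Complex.exp_log h0⟩
    rw [hball1, Complex.exp_log h0]; exact hw
  have hφ₀ : ∀ w ∈ Metric.ball (0:ℂ) r, φ w = φ₀ w := by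
    intro w hw
    by_cases h0 : w = 0
    · rw [h0, hφ0, h00]
    · obtain ⟨s, hs, rfl⟩ := hsurj w (Metric.ball_subset_ball hr1.le hw) h0
      rw [hφe s hs, hΦ.ext s ((hball s).2 hw)]
  have hmaps : ∀ w ∈ Metric.ball (0:ℂ) 1, φ w ∈ A := by
    intro w hw
    by_cases h0 : w = 0
    · rw [h0, hφ0]; exact S.mem
    · obtain ⟨s, hs, rfl⟩ := hsurj w hw h0
      rw [hφe s hs]; exact hΦ.mem s hs
  have hne : ∀ w ∈ Metric.ball (0:ℂ) 1, w ≠ 0 → φ w ≠ z₀ := by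
    intro w hw h0
    obtain ⟨s, hs, rfl⟩ := hsurj w hw h0
    rw [hφe s hs]; exact hΦ.ne s hs
  have hm0 : m ≠ 0 := by omega
  have heqn : ∀ w ∈ Metric.ball (0:ℂ) 1, f (φ w) = φ ((conj w)^m) := by
    intro w hw
    by_cases h0 : w = 0
    · simp [h0, hφ0, S.fix, hm0]
    · obtain ⟨s, hs, rfl⟩ := hsurj w hw h0
      rw [hφe s hs, hΦ.eqn s hs, ← hmc, hφe]
      have : ((m:ℂ) * conj s).re = m * s.re := by simp
      rw [this]
      have : (0:ℝ) < m := by positivity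
      nlinarith
  have hinjφ : Set.InjOn φ (Metric.ball (0:ℂ) 1) := by
    intro a ha b hb hab
    by_cases h0 : a = 0
    · by_contra hn
      refine hne b hb (fun h => hn (h0.trans h.symm)) ?_
      rw [← hab, h0, hφ0]
    · by_cases h1 : b = 0
      · exact absurd (by rw [hab, h1, hφ0]) (hne a ha h0)
      · obtain ⟨s, hs, rfl⟩ := hsurj a ha h0
        obtain ⟨t, ht, rfl⟩ := hsurj b hb h1
        rw [hφe s hs, hφe t ht] at hab
        exact hinj s t hs ht hab
  have hdiff : DifferentiableOn ℂ φ (Metric.ball (0:ℂ) 1) := by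
    intro w hw
    refine DifferentiableAt.differentiableWithinAt ?_
    by_cases h0 : w = 0
    · subst h0
      have hmem := Metric.ball_mem_nhds (0:ℂ) hr
      refine (hd₀.differentiableAt hmem).congr_of_eventuallyEq ?_
      filter_upwards [hmem] with x hx using hφ₀ x hx
    · have hlw : (Complex.log w).re < 0 := by rw [hball1, Complex.exp_log h0]; exact hw
      set g : ℂ → ℂ := fun x => Complex.log (x / w) + Complex.log w with hg
      have hgw : g w = Complex.log w := by simp [hg, div_self h0]
      have hgd : DifferentiableAt ℂ g w := by
        refine DifferentiableAt.add_const _ (DifferentiableAt.clog (by fun_prop) ?_)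
        rw [div_self h0]; exact Complex.one_mem_slitPlane
      have hΦd : DifferentiableAt ℂ Φ (g w) := by
        rw [hgw]; exact hΦ.diff.differentiableAt ((bHP_open 0).mem_nhds hlw)
      refine (DifferentiableAt.comp w hΦd hgd).congr_of_eventuallyEq ?_
      have h1 : ∀ᶠ x in 𝓝 w, g x ∈ BHP 0 :=
        hgd.continuousAt.eventually ((bHP_open 0).mem_nhds (by rw [hgw]; exact hlw))
      have h2 : ∀ᶠ x in 𝓝 w, x ≠ 0 := isOpen_ne.mem_nhds h0
      filter_upwards [h1, h2] with x hx hx0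
      have : Complex.exp (g x) = x := by
        simp only [hg]
        rw [Complex.exp_add, Complex.exp_log (div_ne_zero hx0 h0), Complex.exp_log h0]
        field_simp
      rw [Function.comp_apply, ← hφe _ hx, this]
  refine ⟨φ, hdiff, hinjφ, hφ0, ?_, heqn⟩
  -- openness of the images
  have hopen : ∀ s ⊆ Metric.ball (0:ℂ) 1, IsOpen s → IsOpen (φ '' s) := by
    rcases (hdiff.analyticOnNhd Metric.isOpen_ball).is_constant_or_isOpen
      (convex_ball (0:ℂ) 1).isPreconnected with ⟨c, hc⟩ | h
    · exfalso
      have h1 : (0:ℂ) ∈ Metric.ball (0:ℂ) 1 := Metric.mem_ball_self one_pos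
      have h2 : (1/2:ℂ) ∈ Metric.ball (0:ℂ) 1 := by simp; norm_num
      have := hinjφ h1 h2 ((hc _ h1).trans (hc _ h2).symm)
      norm_num at this
    · exact h
  have hiter : ∀ n : ℕ, ∀ w ∈ Metric.ball (0:ℂ) 1, ∃ v ∈ Metric.ball (0:ℂ) 1,
      f^[n] (φ w) = φ v ∧ ‖v‖ = ‖w‖^(m^n) := by
    intro n w hw
    induction n with
    | zero => exact ⟨w, hw, rfl, by simp⟩
    | succ n ih =>
      obtain ⟨v, hv, h1, h2⟩ := ih
      refine ⟨(conj v)^m, ?_, ?_, ?_⟩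
      · rw [mem_ball_zero_iff, norm_pow, RCLike.norm_conj] at *
        exact pow_lt_one₀ (norm_nonneg _) hv hm0
      · rw [Function.iterate_succ_apply', h1, heqn v hv]
      · rw [norm_pow, RCLike.norm_conj, h2, ← pow_mul, pow_succ]
  apply Set.Subset.antisymm
  · rintro _ ⟨w, hw, rfl⟩; exact hmaps w hw
  · refine S.conn.subset_of_closure_inter_subset (hopen _ subset_rfl Metric.isOpen_ball)
      ⟨z₀, S.mem, 0, Metric.mem_ball_self one_pos, hφ0⟩ ?_
    rintro z ⟨hzc, hzA⟩
    have hUo : IsOpen (φ '' Metric.ball (0:ℂ) r) :=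
      hopen _ (Metric.ball_subset_ball hr1.le) Metric.isOpen_ball
    obtain ⟨n, hn⟩ := ((S.conv z hzA).eventually (hUo.mem_nhds ⟨0, Metric.mem_ball_self hr, hφ0⟩)).exists
    have hV : f^[n] ⁻¹' (φ '' Metric.ball (0:ℂ) r) ∈ 𝓝 z :=
      ((S.cont.iterate n).continuousAt).preimage_mem_nhds (hUo.mem_nhds hn)
    -- radius ρ with ρ^(m^n) ≥ r
    have hmn : m^n ≠ 0 := pow_ne_zero _ hm0
    obtain ⟨ρ, hρ0, hρ1, hρ⟩ : ∃ ρ : ℝ, 0 ≤ ρ ∧ ρ < 1 ∧ r ≤ ρ^(m^n) := by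
      refine ⟨r ^ ((m^n : ℕ) : ℝ)⁻¹, by positivity, ?_, ?_⟩
      · exact Real.rpow_lt_one hr.le hr1 (by positivity)
      · rw [Real.rpow_inv_natCast_pow hr.le hmn]
    have hsub : Metric.closedBall (0:ℂ) ρ ⊆ Metric.ball 0 1 := Metric.closedBall_subset_ball hρ1
    have hcpt : IsCompact (φ '' Metric.closedBall (0:ℂ) ρ) :=
      (isCompact_closedBall _ _).image_of_continuousOn (hdiff.continuousOn.mono hsub)
    have hzcl : z ∈ closure (φ '' Metric.closedBall (0:ℂ) ρ) := by
      rw [mem_closure_iff_nhds] at hzc ⊢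
      intro t ht
      obtain ⟨y, ⟨hy1, hy2⟩, w, hw, rfl⟩ := hzc _ (inter_mem ht hV)
      refine ⟨φ w, hy1, w, ?_, rfl⟩
      obtain ⟨v, hv, h1, h2⟩ := hiter n w hw
      obtain ⟨u, hu, h3⟩ := hy2
      have : u = v := hinjφ (Metric.ball_subset_ball hr1.le hu) hv (h3.trans h1)
      subst this
      rw [mem_ball_zero_iff] at hu
      rw [mem_closedBall_zero_iff]
      by_contra hcon
      have : ρ^(m^n) ≤ ‖w‖^(m^n) := pow_le_pow_left₀ hρ0 (not_le.1 hcon).le _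
      linarith
    rw [hcpt.isClosed.closure_eq] at hzcl
    exact Set.image_mono hsub hzcl

lemma bott_sc {φ : ℂ → ℂ} {A : Set ℂ} (hd : DifferentiableOn ℂ φ (Metric.ball (0 : ℂ) 1))
    (hi : Set.InjOn φ (Metric.ball (0 : ℂ) 1)) (him : φ '' Metric.ball (0 : ℂ) 1 = A) :
    SimplyConnectedSpace A := by
  have hopen : ∀ s ⊆ Metric.ball (0:ℂ) 1, IsOpen s → IsOpen (φ '' s) := by
    rcases (hd.analyticOnNhd Metric.isOpen_ball).is_constant_or_isOpen
      (convex_ball (0:ℂ) 1).isPreconnected with ⟨c, hc⟩ | h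
    · exfalso
      have h1 : (0:ℂ) ∈ Metric.ball (0:ℂ) 1 := Metric.mem_ball_self one_pos
      have h2 : (1/2:ℂ) ∈ Metric.ball (0:ℂ) 1 := by simp; norm_num
      have := hi h1 h2 ((hc _ h1).trans (hc _ h2).symm)
      norm_num at this
    · exact h
  have hemb : IsOpenEmbedding (fun x : Metric.ball (0:ℂ) 1 => φ x) := by
    refine IsOpenEmbedding.of_continuous_injective_isOpenMap
      (continuousOn_iff_continuous_domRestrict.1 hd.continuousOn) hi.injective ?_
    intro s hs
    have : (fun x : Metric.ball (0:ℂ) 1 => φ x) '' s = φ '' (Subtype.val '' s) := by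
      rw [Set.image_image]
    rw [this]
    exact hopen _ (by rintro _ ⟨x, _, rfl⟩; exact x.2)
      (Metric.isOpen_ball.isOpenMap_subtype_val _ hs)
  have : ContractibleSpace (Metric.ball (0:ℂ) 1) :=
    (convex_ball (0:ℂ) 1).contractibleSpace ⟨0, Metric.mem_ball_self one_pos⟩
  have h1 : Set.range (fun x : Metric.ball (0:ℂ) 1 => φ x) = A := by
    rw [← him, Set.image_eq_range]
  rw [← h1]
  exact hemb.isEmbedding.toHomeomorph.symm.toHomotopyEquiv.simplyConnectedSpace

/-- Boettcher coordinate on a superattracting immediate basin of an anti-polynomial: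
if the immediate basin `A` of a superattracting fixed point `z₀` of local degree `m ≥ 2`
contains no other critical point, then `A` is simply connected and there is a conformal
map `φ` of the unit disk onto `A` with `φ 0 = z₀` conjugating `w ↦ (conj w)^m` to `f`. -/
theorem stmt9 (p : Polynomial ℂ) (d : ℕ) (hd : 2 ≤ d) (hdeg : p.natDegree = d)
    (f : ℂ → ℂ) (hf : ∀ z, f z = p.eval ((starRingEnd ℂ) z))
    (z₀ : ℂ) (hfix : f z₀ = z₀)
    (hcrit0 : p.derivative.eval ((starRingEnd ℂ) z₀) = 0)
    (m : ℕ) (hm : 2 ≤ m)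
    (hmdef : m = (p - Polynomial.C z₀).rootMultiplicity ((starRingEnd ℂ) z₀))
    (A : Set ℂ)
    (hA : A = connectedComponentIn
      {z : ℂ | Tendsto (fun n => f^[n] z) atTop (𝓝 z₀)} z₀)
    (honlycrit : ∀ c ∈ A, p.derivative.eval ((starRingEnd ℂ) c) = 0 → c = z₀) :
    SimplyConnectedSpace A ∧
    ∃ φ : ℂ → ℂ, AnalyticOnNhd ℂ φ (Metric.ball (0 : ℂ) 1) ∧
      Set.InjOn φ (Metric.ball (0 : ℂ) 1) ∧
      φ 0 = z₀ ∧
      φ '' Metric.ball (0 : ℂ) 1 = A ∧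
      ∀ w ∈ Metric.ball (0 : ℂ) 1, f (φ w) = φ (((starRingEnd ℂ) w)^m) := by
  have S := bott_setup p (by omega) f hf z₀ hfix hcrit0 A hA honlycrit
  obtain ⟨φ, h1, h2, h3, h4, h5⟩ := S.final m hm hmdef
  exact ⟨bott_sc h1 h2 h4, φ, h1.analyticOnNhd Metric.isOpen_ball, h2, h3, h4, h5⟩
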